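/- arXiv:1801.03158 — 3 statements merged into one kernel-verified Lean document; each statement's English description precedes it below -/
import Mathlib

section
/- Let 𝒟 be a finite set of pairwise intersecting closed disks (closed balls of positive radius) in the Euclidean plane ℝ². Then there exists a set P of at most five points in ℝ² such that every disk in 𝒟 contains at least one point of P. -/
/-!
Let `O` minimize the largest excess `dist O (c i) - r i`, and let `ρ` be the minimum. If `ρ ≤ 0`,
then `O` lies in every disk. Otherwise call a unit vector `u` a reach direction if every disk meets
the half-plane `ρ ≤ ⟪x - O, u⟫`. The direction towards a disk that is extremal at `O` is one,
because all other disks meet that disk; hence, by minimality, no displacement of `O` has positive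
inner product with all reach directions, and `0` lies in their convex hull.

By Carathéodory, `0` is in the convex hull of three reach directions `a`, `p`, `q`, where we may
assume that `p` and `q` enclose an angle of at most `120°`. Since all disks reach as far as `ρ` in
these three directions, every disk, with centre `O + w` and radius `r`, satisfies
`|⟪w, a⟫| ≤ r - ρ` or `‖w‖ ≤ 2 * (r - ρ)`. Together with `‖w‖ ≤ r + ρ` this forces the disk to
contain `O`, one of `O ± (5 / 2) * ρ • a`, or one of `O ± 2 * ρ • b`, where `b` is a unit vector
orthogonal to `a`.
-/

open Metric Module
open scoped RealInnerProductSpace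

section MaxExcess

variable {X ι : Type*} [PseudoMetricSpace X]

/-- The maximal excess of `p` over the balls `closedBall (c i) (r i)`: the least amount by which all
radii have to be increased for `p` to lie in every ball (negative if the balls may shrink). It is a
junk value when the excesses are unbounded, which cannot happen for pairwise intersecting balls. -/
noncomputable def maxExcess (c : ι → X) (r : ι → ℝ) (p : X) : ℝ :=
  ⨆ i, (dist p (c i) - r i)

variable {c : ι → X} {r : ι → ℝ}

lemma bddAbove_range_dist_sub (hd : ∀ i j, dist (c i) (c j) ≤ r i + r j) (p : X) :
    BddAbove (Set.range fun i => dist p (c i) - r i) := by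
  rcases isEmpty_or_nonempty ι with _ | ⟨⟨i₀⟩⟩
  · simp
  · refine ⟨dist p (c i₀) + r i₀, Set.forall_mem_range.2 fun i => ?_⟩
    linarith [dist_triangle p (c i₀) (c i), hd i₀ i]

lemma dist_le_add_maxExcess (hd : ∀ i j, dist (c i) (c j) ≤ r i + r j) (p : X) (i : ι) :
    dist p (c i) ≤ r i + maxExcess c r p :=
  sub_le_iff_le_add'.1 (le_ciSup (bddAbove_range_dist_sub hd p) i)

lemma lipschitzWith_maxExcess [Nonempty ι] (hd : ∀ i j, dist (c i) (c j) ≤ r i + r j) :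
    LipschitzWith 1 (maxExcess c r) :=
  LipschitzWith.of_le_add fun p q => ciSup_le fun i => by
    linarith [dist_triangle p q (c i), dist_le_add_maxExcess hd q i]

lemma exists_forall_maxExcess_le [ProperSpace X] [Nonempty ι]
    (hd : ∀ i j, dist (c i) (c j) ≤ r i + r j) :
    ∃ O, ∀ p, maxExcess c r O ≤ maxExcess c r p := by
  obtain ⟨i₀⟩ := ‹Nonempty ι›
  have : Nonempty X := ⟨c i₀⟩
  refine (lipschitzWith_maxExcess hd).continuous.exists_forall_le ?_
  refine Filter.tendsto_atTop_mono (fun p => ?_)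
    (Filter.tendsto_atTop_add_const_right _ (-r i₀) (tendsto_dist_right_cocompact_atTop (c i₀)))
  linarith [dist_le_add_maxExcess hd p i₀]

end MaxExcess

section ConvexHull

variable {E : Type*} [AddCommGroup E] [Module ℝ E]

lemma exists_stdSimplex_sum_smul_eq [FiniteDimensional ℝ E] {d : ℕ}
    (hd : finrank ℝ E ≤ d) {A : Set E} {x : E} (hx : x ∈ convexHull ℝ A) :
    ∃ w ∈ stdSimplex ℝ (Fin (d + 1)), ∃ z : Fin (d + 1) → E, (∀ i, z i ∈ A) ∧
      ∑ i, w i • z i = x := by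
  obtain ⟨a₀, ha₀⟩ := convexHull_nonempty_iff.1 ⟨x, hx⟩
  obtain ⟨κ, _, z, w, hz, hind, hw, hw1, rfl⟩ := eq_pos_convex_span_of_mem_convexHull hx
  have hcard : Fintype.card κ ≤ Fintype.card (Fin (d + 1)) := by
    have := Submodule.finrank_le (vectorSpan ℝ (Set.range z))
    have := hind.card_le_finrank_succ
    simp only [Fintype.card_fin]
    omega
  obtain ⟨f⟩ := Function.Embedding.nonempty_of_card_le hcard
  let w' : Fin (d + 1) → ℝ := Function.extend f w fun _ => 0
  let z' : Fin (d + 1) → E := Function.extend f z fun _ => a₀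
  have hw' (k) : w' (f k) = w k := f.injective.extend_apply w _ k
  have hz' (k) : z' (f k) = z k := f.injective.extend_apply z _ k
  have hw'_zero (i) (hi : i ∉ Set.range f) : w' i = 0 :=
    Function.extend_apply' w _ i hi
  refine ⟨w', ⟨fun i => ?_, ?_⟩, z', fun i => ?_, ?_⟩
  · by_cases hi : i ∈ Set.range f
    · obtain ⟨k, rfl⟩ := hi
      exact (hw k).le.trans_eq (hw' k).symm
    · exact (hw'_zero i hi).ge
  · rw [← hw1]
    exact (Fintype.sum_of_injective f f.injective w w' hw'_zero fun k => (hw' k).symm).symm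
  · by_cases hi : i ∈ Set.range f
    · obtain ⟨k, rfl⟩ := hi
      simpa only [hz'] using hz ⟨k, rfl⟩
    · rwa [show z' i = a₀ from Function.extend_apply' z _ i hi]
  · refine (Fintype.sum_of_injective f f.injective _ _ (fun i hi => ?_) fun k => ?_).symm
    · rw [hw'_zero i hi, zero_smul]
    · rw [hw', hz']

lemma convexHull_eq_image_stdSimplex [FiniteDimensional ℝ E] {d : ℕ}
    (hd : finrank ℝ E ≤ d) (A : Set E) :
    convexHull ℝ A = (fun x : (Fin (d + 1) → ℝ) × (Fin (d + 1) → E) => ∑ i, x.1 i • x.2 i) ''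
      (stdSimplex ℝ (Fin (d + 1)) ×ˢ Set.univ.pi fun _ => A) := by
  apply Set.Subset.antisymm
  · intro x hx
    obtain ⟨w, hw, z, hz, rfl⟩ := exists_stdSimplex_sum_smul_eq hd hx
    exact ⟨(w, z), ⟨hw, fun i _ => hz i⟩, rfl⟩
  · rintro _ ⟨⟨w, z⟩, ⟨⟨hw, hw1⟩, hz⟩, rfl⟩
    exact (convex_convexHull ℝ A).sum_mem (fun i _ => hw i) hw1
      fun i _ => subset_convexHull ℝ A (hz i trivial)

lemma exists_mem_convexHull_triple [FiniteDimensional ℝ E] (hE : finrank ℝ E ≤ 2) {A : Set E}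
    {x : E} (hx : x ∈ convexHull ℝ A) :
    ∃ a ∈ A, ∃ p ∈ A, ∃ q ∈ A, x ∈ convexHull ℝ {a, p, q} := by
  obtain ⟨w, ⟨hw, hw1⟩, z, hz, rfl⟩ := exists_stdSimplex_sum_smul_eq hE hx
  refine ⟨z 0, hz 0, z 1, hz 1, z 2, hz 2,
    (convex_convexHull ℝ _).sum_mem (fun i _ => hw i) hw1 fun i _ => subset_convexHull ℝ _ ?_⟩
  fin_cases i <;> simp

lemma exists_neg_eq_add_of_zero_mem_convexHull {a p q : E} (h : 0 ∈ convexHull ℝ {a, p, q})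
    (hpq : 0 ∉ segment ℝ p q) : ∃ m n : ℝ, 0 ≤ m ∧ 0 ≤ n ∧ -a = m • p + n • q := by
  rw [convexHull_insert (Set.insert_nonempty _ _), convexHull_pair, mem_convexJoin] at h
  obtain ⟨_, rfl : _ = a, y, hy, s, t, hs, ht, hst, hsum⟩ := h
  obtain ⟨m, n, hm, hn, -, rfl⟩ := id hy
  have hs0 : s ≠ 0 := by
    rintro rfl
    obtain rfl : t = 1 := by linarith
    rw [zero_smul, one_smul, zero_add] at hsum
    exact hpq (hsum ▸ hy)
  refine ⟨s⁻¹ * (t * m), s⁻¹ * (t * n), by positivity, by positivity, ?_⟩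
  simp only [mul_smul, ← smul_add]
  rw [eq_neg_of_add_eq_zero_right hsum, smul_neg, inv_smul_smul₀ hs0]

lemma isCompact_convexHull_of_finiteDimensional [FiniteDimensional ℝ E]
    [TopologicalSpace E] [IsTopologicalAddGroup E] [ContinuousSMul ℝ E] {A : Set E}
    (hA : IsCompact A) : IsCompact (convexHull ℝ A) := by
  rw [convexHull_eq_image_stdSimplex le_rfl]
  exact ((isCompact_stdSimplex _ _).prod (isCompact_univ_pi fun _ => hA)).image (by fun_prop)

end ConvexHull

section ReachDirections

variable {E ι : Type*} [NormedAddCommGroup E] [InnerProductSpace ℝ E]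

lemma zero_mem_convexHull_of_forall_exists_inner_nonpos [FiniteDimensional ℝ E]
    {A : Set E} (hA : IsCompact A) (h : ∀ v, ∃ u ∈ A, ⟪v, u⟫ ≤ 0) :
    0 ∈ convexHull ℝ A := by
  by_contra h0
  obtain ⟨f, t, hf0, hf⟩ := geometric_hahn_banach_point_closed (convex_convexHull ℝ A)
    (isCompact_convexHull_of_finiteDimensional hA).isClosed h0
  obtain ⟨u, hu, hle⟩ := h ((InnerProductSpace.toDual ℝ E).symm f)
  rw [InnerProductSpace.toDual_symm_apply] at hle
  rw [map_zero] at hf0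
  linarith [hf u (subset_convexHull ℝ A hu)]

/-- The unit vectors `u` such that every ball `closedBall (c i) (r i)` meets the half-space of all
`x` with `ρ ≤ ⟪x - O, u⟫`. -/
def reachDirections (c : ι → E) (r : ι → ℝ) (O : E) (ρ : ℝ) : Set E :=
  {u | ‖u‖ = 1 ∧ ∀ i, ρ ≤ ⟪c i - O, u⟫ + r i}

variable {c : ι → E} {r : ι → ℝ} {O : E}

lemma isCompact_reachDirections [FiniteDimensional ℝ E] (ρ : ℝ) :
    IsCompact (reachDirections c r O ρ) := by
  refine (isCompact_sphere (0 : E) 1).of_isClosed_subset ?_ fun u hu => by simpa using hu.1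
  simp only [reachDirections, Set.ofPred_and, Set.ofPred_forall]
  exact (isClosed_eq (by fun_prop) (by fun_prop)).inter
    (isClosed_iInter fun i => isClosed_le (by fun_prop) (by fun_prop))

/- Moving `O` by a small step in direction `v` does not decrease the maximal excess, so some disk
remains almost extremal; `u` is the direction of that disk as seen from the displaced point. -/
lemma exists_mem_reachDirections_sub_inner_le [Nonempty ι]
    (hd : ∀ i j, dist (c i) (c j) ≤ r i + r j)
    (hmin : ∀ p, maxExcess c r O ≤ maxExcess c r p) (hpos : 0 < maxExcess c r O)
    (v : E) {ε : ℝ} (hε : 0 < ε) :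
    ∃ u ∈ reachDirections c r O (maxExcess c r O - ε), ⟪v, u⟫ ≤ ε := by
  set ρ := maxExcess c r O
  obtain ⟨t, ht, htε⟩ : ∃ t > 0, t * ε + t * ‖v‖ = ε :=
    ⟨ε / (ε + ‖v‖), by positivity, by field_simp⟩
  have hδ : 0 < min (t * ε) ρ := lt_min (mul_pos ht hε) hpos
  obtain ⟨i, hi⟩ := exists_lt_of_lt_ciSup ((sub_lt_self ρ hδ).trans_le (hmin (O + t • v)))
  have hri : 0 ≤ r i := by linarith [hd i i, dist_self (c i)]
  have hδε := min_le_left (t * ε) ρ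
  have hδρ := min_le_right (t * ε) ρ
  have hne : c i - (O + t • v) ≠ 0 := by
    rw [sub_ne_zero, ← dist_pos, dist_comm]
    linarith
  set u := NormedSpace.normalize (c i - (O + t • v)) with hu_def
  have hu : ‖u‖ = 1 := NormedSpace.norm_normalize hne
  have hinner_le (x : E) : ⟪x, u⟫ ≤ ‖x‖ := by simpa [hu] using real_inner_le_norm x u
  have hsplit : ⟪c i - O, u⟫ = dist (O + t • v) (c i) + t * ⟪v, u⟫ := by
    have hself : ⟪c i - (O + t • v), u⟫ = ‖c i - (O + t • v)‖ := by
      rw [hu_def, NormedSpace.normalize, real_inner_smul_right, real_inner_self_eq_norm_sq]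
      field_simp
    rw [dist_comm, dist_eq_norm, ← hself, ← real_inner_smul_left, ← inner_add_left]
    congr 1
    abel
  refine ⟨u, ⟨hu, fun j => ?_⟩, ?_⟩
  · have hij : ⟪c i - O, u⟫ - ⟪c j - O, u⟫ ≤ r i + r j := by
      rw [← inner_sub_left, sub_sub_sub_cancel_right]
      exact (hinner_le _).trans ((dist_eq_norm (c i) (c j)).symm.trans_le (hd i j))
    have hvu : t * -⟪v, u⟫ ≤ t * ‖v‖ := by
      gcongr
      simpa using hinner_le (-v)
    linarith
  · have hOi : ⟪c i - O, u⟫ ≤ r i + ρ :=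
      (hinner_le _).trans ((dist_eq_norm' O (c i)).symm.trans_le (dist_le_add_maxExcess hd O i))
    exact le_of_mul_le_mul_left (by linarith) ht

lemma exists_mem_reachDirections_inner_nonpos [FiniteDimensional ℝ E] [Nonempty ι]
    (hd : ∀ i j, dist (c i) (c j) ≤ r i + r j)
    (hmin : ∀ p, maxExcess c r O ≤ maxExcess c r p) (hpos : 0 < maxExcess c r O) (v : E) :
    ∃ u ∈ reachDirections c r O (maxExcess c r O), ⟪v, u⟫ ≤ 0 := by
  choose u hu hvu using fun n : ℕ =>
    exists_mem_reachDirections_sub_inner_le hd hmin hpos v (Nat.one_div_pos_of_nat (n := n))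
  obtain ⟨w, hw, φ, hφ, hlim⟩ := (isCompact_sphere (0 : E) 1).tendsto_subseq
    fun n => mem_sphere_zero_iff_norm.2 (hu n).1
  have hε : Filter.Tendsto (fun n => 1 / ((φ n : ℝ) + 1)) Filter.atTop (nhds 0) :=
    tendsto_one_div_add_atTop_nhds_zero_nat.comp hφ.tendsto_atTop
  refine ⟨w, ⟨mem_sphere_zero_iff_norm.1 hw, fun i => ?_⟩, ?_⟩
  · refine le_of_tendsto_of_tendsto' (by simpa using hε.const_sub (maxExcess c r O))
      ((tendsto_const_nhds.inner hlim).add_const (r i)) fun n => (hu (φ n)).2 i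
  · exact le_of_tendsto_of_tendsto' (tendsto_const_nhds.inner hlim) hε fun n => hvu (φ n)

lemma zero_mem_convexHull_reachDirections [FiniteDimensional ℝ E] [Nonempty ι]
    (hd : ∀ i j, dist (c i) (c j) ≤ r i + r j)
    (hmin : ∀ p, maxExcess c r O ≤ maxExcess c r p) (hpos : 0 < maxExcess c r O) :
    0 ∈ convexHull ℝ (reachDirections c r O (maxExcess c r O)) :=
  zero_mem_convexHull_of_forall_exists_inner_nonpos (isCompact_reachDirections _)
    (exists_mem_reachDirections_inner_nonpos hd hmin hpos)

end ReachDirections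

section Wedge

variable {E : Type*} [NormedAddCommGroup E] [InnerProductSpace ℝ E]

lemma zero_notMem_segment_of_inner {p q : E} (hp : ‖p‖ = 1) (hq : ‖q‖ = 1)
    (hpq : -1 < ⟪p, q⟫) : (0 : E) ∉ segment ℝ p q := by
  rintro ⟨m, n, -, -, hmn, h⟩
  have hmp : m + n * ⟪p, q⟫ = 0 := by
    simpa [inner_add_right, inner_smul_right, hp] using congrArg (⟪p, ·⟫) h
  have hnq : m * ⟪p, q⟫ + n = 0 := by
    simpa [inner_add_right, inner_smul_right, hq, real_inner_comm] using congrArg (⟪q, ·⟫) h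
  have : (m + n) * (1 + ⟪p, q⟫) = 0 := by linear_combination hmp + hnq
  rw [hmn] at this
  linarith

lemma exists_eq_add_smul_of_inner [Fact (finrank ℝ E = 2)] {p q : E} (hp : ‖p‖ = 1)
    (hq : ‖q‖ = 1) (hpq : -1 < ⟪p, q⟫) (hne : p ≠ q) (z : E) :
    ∃ x y : ℝ, z = x • p + y • q := by
  have hp0 : p ≠ 0 := norm_ne_zero_iff.1 (by simp [hp])
  have hind : LinearIndependent ℝ ![p, q] := by
    rw [LinearIndependent.pair_iff' hp0]
    rintro t rfl
    have ht : |t| = 1 := by simpa [norm_smul, hp] using hq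
    rcases eq_or_eq_neg_of_abs_eq ht with rfl | rfl
    · exact hne (one_smul ℝ p).symm
    · simp [hp] at hpq
  have hspan := hind.span_eq_top_of_card_eq_finrank (by simp [Fact.out (p := finrank ℝ E = 2)])
  rw [Matrix.range_cons_cons_empty] at hspan
  obtain ⟨x, y, h⟩ := Submodule.mem_span_pair.1 (hspan ▸ Submodule.mem_top : z ∈ _)
  exact ⟨x, y, h.symm⟩

lemma norm_le_two_mul_of_mem_cone {p q : E} {x y s : ℝ} (hp : ‖p‖ = 1) (hq : ‖q‖ = 1)
    (hpq : -1 / 2 ≤ ⟪p, q⟫) (hx : 0 ≤ x) (hy : 0 ≤ y) (hzp : ⟪x • p + y • q, p⟫ ≤ s)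
    (hzq : ⟪x • p + y • q, q⟫ ≤ s) : ‖x • p + y • q‖ ≤ 2 * s := by
  set z := x • p + y • q with hz
  have hsum : ⟪z, p⟫ + ⟪z, q⟫ = (x + y) * (1 + ⟪p, q⟫) := by
    simp only [hz, inner_add_left, real_inner_smul_left, real_inner_self_eq_norm_sq, hp, hq,
      real_inner_comm p q]
    ring
  have hxy : x + y ≤ 4 * s := by nlinarith [add_nonneg hx hy]
  have hs : 0 ≤ s := by linarith
  refine abs_le_of_sq_le_sq' ?_ (by positivity) |>.2
  calc ‖z‖ ^ 2 = x * ⟪z, p⟫ + y * ⟪z, q⟫ := by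
        rw [← real_inner_self_eq_norm_sq, ← inner_smul_right, ← inner_smul_right,
          ← inner_add_right]
    _ ≤ x * s + y * s := by gcongr
    _ = (x + y) * s := by ring
    _ ≤ 4 * s * s := by gcongr
    _ = (2 * s) ^ 2 := by ring

/- The components of `b` and `z` orthogonal to `p` are multiples of `q - ⟪p, q⟫ • p` with opposite
signs, so only the components along `p` contribute positively to `⟪z, b⟫`. -/
lemma inner_le_inner_of_coeff_nonpos {p q : E} {m n x y : ℝ} (hp : ‖p‖ = 1) (hq : ‖q‖ = 1)
    (hb : ‖m • p + n • q‖ = 1) (hn : 0 ≤ n) (hy : y ≤ 0) (hzp : 0 ≤ ⟪x • p + y • q, p⟫) :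
    ⟪x • p + y • q, m • p + n • q⟫ ≤ ⟪x • p + y • q, p⟫ := by
  set b := m • p + n • q with hb_def
  set z := x • p + y • q with hz_def
  have hk : ⟪p, q⟫ ^ 2 ≤ 1 := by
    rw [sq_le_one_iff_abs_le_one]
    simpa [hp, hq] using abs_real_inner_le_norm p q
  have hpb : ⟪p, b⟫ ≤ 1 := by simpa [hp, hb] using real_inner_le_norm p b
  have hdecomp : ⟪z, b⟫ = ⟪z, p⟫ * ⟪p, b⟫ + y * n * (1 - ⟪p, q⟫ ^ 2) := by
    simp only [hb_def, hz_def, inner_add_left, inner_add_right, real_inner_smul_left,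
      real_inner_smul_right, real_inner_self_eq_norm_sq, hp, hq, real_inner_comm p q]
    ring
  have hperp : y * n * (1 - ⟪p, q⟫ ^ 2) ≤ 0 :=
    mul_nonpos_of_nonpos_of_nonneg (mul_nonpos_of_nonpos_of_nonneg hy hn) (by linarith)
  calc ⟪z, b⟫ ≤ ⟪z, p⟫ * ⟪p, b⟫ := by linarith
    _ ≤ ⟪z, p⟫ := mul_le_of_le_one_right hzp hpb

lemma coeff_nonneg_of_lt_inner {p q : E} {m n x y s : ℝ} (hp : ‖p‖ = 1) (hq : ‖q‖ = 1)
    (hb : ‖m • p + n • q‖ = 1) (hm : 0 ≤ m) (hn : 0 ≤ n) (hs : 0 ≤ s)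
    (hzp : ⟪x • p + y • q, p⟫ ≤ s) (hzq : ⟪x • p + y • q, q⟫ ≤ s)
    (hzb : s < ⟪x • p + y • q, m • p + n • q⟫) : 0 ≤ y := by
  by_contra! hy
  have hzp_neg : ⟪x • p + y • q, p⟫ < 0 := by
    by_contra! h
    exact (inner_le_inner_of_coeff_nonpos hp hq hb hn hy.le h).not_gt (hzp.trans_lt hzb)
  have hzq_neg (hx : x < 0) : ⟪x • p + y • q, q⟫ < 0 := by
    by_contra! h
    rw [add_comm (x • p)] at h hzq hzb
    rw [add_comm (m • p)] at hb hzb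
    exact (inner_le_inner_of_coeff_nonpos hq hp hb hm hx.le h).not_gt (hzq.trans_lt hzb)
  have hp_expand : ⟪x • p + y • q, p⟫ = x + y * ⟪p, q⟫ := by
    simp [inner_add_left, real_inner_smul_left, hp, real_inner_comm p q]
  have hq_expand : ⟪x • p + y • q, q⟫ = x * ⟪p, q⟫ + y := by
    simp [inner_add_left, real_inner_smul_left, hq]
  have hzq_nonpos : ⟪x • p + y • q, q⟫ ≤ 0 := by
    rcases lt_or_ge x 0 with hx | hx
    · exact (hzq_neg hx).le
    · have hk : 0 ≤ ⟪p, q⟫ := by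
        by_contra! hk
        linarith [mul_pos_of_neg_of_neg hy hk]
      have hk1 : ⟪p, q⟫ ≤ 1 := by simpa [hp, hq] using real_inner_le_norm p q
      calc ⟪x • p + y • q, q⟫ = x * ⟪p, q⟫ + y := hq_expand
        _ ≤ -(y * ⟪p, q⟫) * ⟪p, q⟫ + y := by gcongr; linarith
        _ = -y * (⟪p, q⟫ ^ 2 - 1) := by ring
        _ ≤ 0 := mul_nonpos_of_nonneg_of_nonpos (by linarith)
          (sub_nonpos.2 (pow_le_one₀ hk hk1))
  rw [inner_add_right, real_inner_smul_right, real_inner_smul_right] at hzb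
  linarith [mul_nonpos_of_nonneg_of_nonpos hm hzp_neg.le,
    mul_nonpos_of_nonneg_of_nonpos hn hzq_nonpos]

lemma norm_le_two_mul_of_lt_inner [Fact (finrank ℝ E = 2)] {p q z : E} {m n s : ℝ}
    (hp : ‖p‖ = 1) (hq : ‖q‖ = 1) (hpq : -1 / 2 ≤ ⟪p, q⟫) (hb : ‖m • p + n • q‖ = 1)
    (hm : 0 ≤ m) (hn : 0 ≤ n) (hs : 0 ≤ s) (hzp : ⟪z, p⟫ ≤ s) (hzq : ⟪z, q⟫ ≤ s)
    (hzb : s < ⟪z, m • p + n • q⟫) : ‖z‖ ≤ 2 * s := by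
  rcases eq_or_ne p q with rfl | hne
  · have hmn : m + n = 1 := by
      rwa [← add_smul, norm_smul, hp, mul_one, Real.norm_of_nonneg (by positivity)] at hb
    rw [← add_smul, hmn, one_smul] at hzb
    exact absurd hzp hzb.not_ge
  obtain ⟨x, y, rfl⟩ := exists_eq_add_smul_of_inner hp hq (by linarith) hne z
  have hy : 0 ≤ y := coeff_nonneg_of_lt_inner hp hq hb hm hn hs hzp hzq hzb
  have hx : 0 ≤ x := by
    rw [add_comm (x • p)] at hzp hzq hzb
    rw [add_comm (m • p)] at hb hzb
    exact coeff_nonneg_of_lt_inner hq hp hb hn hm hs hzq hzp hzb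
  exact norm_le_two_mul_of_mem_cone hp hq hpq hx hy hzp hzq

end Wedge

section Axis

variable {E : Type*} [NormedAddCommGroup E] [InnerProductSpace ℝ E]

lemma nonneg_of_zero_mem_convexHull {A : Set E} (h0 : 0 ∈ convexHull ℝ A) {w : E} {s : ℝ}
    (h : ∀ u ∈ A, -s ≤ ⟪w, u⟫) : 0 ≤ s := by
  have hw : -s ≤ ⟪w, (0 : E)⟫ :=
    convexHull_min h (convex_halfSpace_ge (innerₛₗ ℝ w).isLinear (-s)) h0
  simpa using hw

lemma exists_neg_half_le_inner {a p q : E} (ha : ‖a‖ = 1) (hp : ‖p‖ = 1) (hq : ‖q‖ = 1) :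
    -1 / 2 ≤ ⟪p, q⟫ ∨ -1 / 2 ≤ ⟪a, q⟫ ∨ -1 / 2 ≤ ⟪a, p⟫ := by
  by_contra! h
  have hsq : ‖a + p + q‖ ^ 2 = 3 + 2 * (⟪p, q⟫ + ⟪a, q⟫ + ⟪a, p⟫) := by
    rw [norm_add_sq_real, norm_add_sq_real, inner_add_left, ha, hp, hq]
    ring
  linarith [sq_nonneg ‖a + p + q‖]

lemma abs_inner_le_or_norm_le [Fact (finrank ℝ E = 2)] {a p q w : E} {s : ℝ}
    (h0 : 0 ∈ convexHull ℝ {a, p, q}) (ha : ‖a‖ = 1) (hp : ‖p‖ = 1) (hq : ‖q‖ = 1)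
    (hpq : -1 / 2 ≤ ⟪p, q⟫) (h : ∀ u ∈ ({a, p, q} : Set E), -s ≤ ⟪w, u⟫) :
    |⟪w, a⟫| ≤ s ∨ ‖w‖ ≤ 2 * s := by
  have hs : 0 ≤ s := nonneg_of_zero_mem_convexHull h0 h
  obtain ⟨m, n, hm, hn, hmn⟩ := exists_neg_eq_add_of_zero_mem_convexHull h0
    (zero_notMem_segment_of_inner hp hq (by linarith))
  have hwp : ⟪-w, p⟫ ≤ s := by
    rw [inner_neg_left]
    linarith [h p (by simp)]
  have hwq : ⟪-w, q⟫ ≤ s := by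
    rw [inner_neg_left]
    linarith [h q (by simp)]
  rcases le_or_gt ⟪w, a⟫ s with hwa | hwa
  · exact .inl (abs_le.2 ⟨h a (by simp), hwa⟩)
  · right
    rw [← norm_neg]
    refine norm_le_two_mul_of_lt_inner hp hq hpq ?_ hm hn hs hwp hwq ?_
    · rwa [← hmn, norm_neg]
    · rwa [← hmn, inner_neg_neg]

lemma exists_axis [Fact (finrank ℝ E = 2)] {A : Set E} (hA : ∀ u ∈ A, ‖u‖ = 1)
    (h0 : 0 ∈ convexHull ℝ A) :
    ∃ a : E, ‖a‖ = 1 ∧ ∀ (w : E) (s : ℝ), (∀ u ∈ A, -s ≤ ⟪w, u⟫) →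
      |⟪w, a⟫| ≤ s ∨ ‖w‖ ≤ 2 * s := by
  have := FiniteDimensional.of_fact_finrank_eq_two (K := ℝ) (V := E)
  obtain ⟨a, haA, p, hpA, q, hqA, h0⟩ :=
    exists_mem_convexHull_triple (Fact.out : finrank ℝ E = 2).le h0
  have ha := hA a haA
  have hp := hA p hpA
  have hq := hA q hqA
  rcases exists_neg_half_le_inner ha hp hq with hpq | haq | hap
  · exact ⟨a, ha, fun w s h => abs_inner_le_or_norm_le h0 ha hp hq hpq (by simp [*])⟩
  · rw [Set.insert_comm] at h0
    exact ⟨p, hp, fun w s h => abs_inner_le_or_norm_le h0 hp ha hq haq (by simp [*])⟩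
  · rw [Set.pair_comm, Set.insert_comm] at h0
    exact ⟨q, hq, fun w s h => abs_inner_le_or_norm_le h0 hq ha hp hap (by simp [*])⟩

end Axis

section Cross

lemma lt_of_sq_add_lt {r k : ℝ} (hr : 1 ≤ r) (hk : 0 < k) (hkr : k ≤ 2 * r + 1)
    (h : r ^ 2 + k < (1 + k / 4) ^ 2 + (5 / 4 + k / 5) ^ 2) : r < 251 / 100 := by
  have hk_sq : k ^ 2 ≤ (2 * r + 1) ^ 2 := by gcongr
  have hr_sq : r ^ 2 < 41 / 16 + 41 / 400 * (2 * r + 1) ^ 2 := by linarith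
  by_contra! hr'
  linarith [hr_sq, mul_nonneg (sub_nonneg.2 hr') (sub_nonneg.2 hr)]

/- With `k = x ^ 2 + y ^ 2 - r ^ 2`, failure of both inequalities means `x < 1 + k / 4` and
`y < 5 / 4 + k / 5`. These bound `r` and are then incompatible with either alternative in `h`. -/
lemma sq_le_or_sq_le_of_le {x y r : ℝ} (hx : 0 ≤ x) (hy : 0 ≤ y) (hr : 1 ≤ r)
    (h0 : r ^ 2 < x ^ 2 + y ^ 2) (h1 : x ^ 2 + y ^ 2 ≤ (r + 1) ^ 2)
    (h : y ≤ r - 1 ∨ x ^ 2 + y ^ 2 ≤ (2 * (r - 1)) ^ 2) :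
    (x - 2) ^ 2 + y ^ 2 ≤ r ^ 2 ∨ x ^ 2 + (y - 5 / 2) ^ 2 ≤ r ^ 2 := by
  by_contra! hcon
  obtain ⟨hcon_x, hcon_y⟩ := hcon
  obtain ⟨k, hk⟩ : ∃ k, x ^ 2 + y ^ 2 = r ^ 2 + k := ⟨_, (add_sub_cancel _ _).symm⟩
  have hk_pos : 0 < k := by linarith
  have hkr : k ≤ 2 * r + 1 := by linarith
  have hx_sq : x ^ 2 < (1 + k / 4) ^ 2 := by
    gcongr
    linarith
  have hy_sq : y ^ 2 < (5 / 4 + k / 5) ^ 2 := by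
    gcongr
    linarith
  have hr_lt : r < 251 / 100 := lt_of_sq_add_lt hr hk_pos hkr (by linarith)
  rcases h with h | h
  · have hy_sq' : y ^ 2 ≤ (r - 1) ^ 2 := by gcongr
    have hk_sq : k * k ≤ k * (2 * (251 / 100) + 1) := by
      gcongr
      linarith
    linarith
  · have hk_le : k ≤ (3 * r - 2) * (r - 2) := by linarith
    have hr_gt : 2 < r :=
      sub_pos.1 (pos_of_mul_pos_right (hk_pos.trans_le hk_le) (by linarith))
    have hk_le_three : k ≤ 3 := by
      calc k ≤ (3 * r - 2) * (r - 2) := hk_le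
        _ ≤ (3 * (251 / 100) - 2) * (251 / 100 - 2) := by gcongr
        _ ≤ 3 := by norm_num
    have hk_sq : k ^ 2 ≤ 3 ^ 2 := by gcongr
    have : 2 ^ 2 < r ^ 2 := by gcongr
    linarith

variable {E : Type*} [NormedAddCommGroup E] [InnerProductSpace ℝ E]

open Classical in
/-- The centre and the four end points of a cross with arms of length `5 / 2` along `e 0` and of
length `2` along `e 1`: up to translation and scaling, the five stabbing points. -/
noncomputable def cross (e : OrthonormalBasis (Fin 2) ℝ E) : Finset E :=
  {0, (2 : ℝ) • e 1, (-2 : ℝ) • e 1, (5 / 2 : ℝ) • e 0, (-(5 / 2) : ℝ) • e 0}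

lemma card_cross_le (e : OrthonormalBasis (Fin 2) ℝ E) : (cross e).card ≤ 5 := by
  classical exact Finset.card_le_five

lemma exists_norm_sub_smul_sq_eq {u : E} (hu : ‖u‖ = 1) (w : E) (t : ℝ) :
    ∃ τ, (τ = t ∨ τ = -t) ∧ ‖w - τ • u‖ ^ 2 = ‖w‖ ^ 2 - 2 * t * |⟪w, u⟫| + t ^ 2 := by
  have hexpand (τ : ℝ) : ‖w - τ • u‖ ^ 2 = ‖w‖ ^ 2 - 2 * τ * ⟪w, u⟫ + τ ^ 2 := by
    rw [norm_sub_sq_real, real_inner_smul_right, norm_smul, hu, mul_one, Real.norm_eq_abs, sq_abs]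
    ring
  rcases abs_choice ⟪w, u⟫ with h | h
  · exact ⟨t, .inl rfl, by rw [hexpand, h]⟩
  · exact ⟨-t, .inr rfl, by rw [hexpand, h]; ring⟩

lemma exists_mem_cross_norm_sub_le_of_one_le (e : OrthonormalBasis (Fin 2) ℝ E) {w : E} {r : ℝ}
    (hr : 1 ≤ r) (hw : ‖w‖ ≤ r + 1) (h : |⟪w, e 0⟫| ≤ r - 1 ∨ ‖w‖ ≤ 2 * (r - 1)) :
    ∃ x ∈ cross e, ‖w - x‖ ≤ r := by
  rcases le_or_gt ‖w‖ r with hwr | hwr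
  · exact ⟨0, by simp [cross], by simpa using hwr⟩
  have hsq : |⟪w, e 1⟫| ^ 2 + |⟪w, e 0⟫| ^ 2 = ‖w‖ ^ 2 := by
    simp [← e.sum_sq_inner_left w, add_comm]
  have hcover := sq_le_or_sq_le_of_le (abs_nonneg ⟪w, e 1⟫) (abs_nonneg ⟪w, e 0⟫) hr
    (by rw [hsq]; gcongr) (by rw [hsq]; gcongr)
    (h.imp_right fun h => by rw [hsq]; gcongr)
  suffices ∃ x ∈ cross e, ‖w - x‖ ^ 2 ≤ r ^ 2 by
    obtain ⟨x, hx, hle⟩ := this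
    exact ⟨x, hx, le_of_sq_le_sq hle (by linarith)⟩
  rcases hcover with hcover | hcover
  · obtain ⟨τ, hτ, hsq_τ⟩ := exists_norm_sub_smul_sq_eq (e.norm_eq_one 1) w 2
    exact ⟨τ • e 1, by rcases hτ with rfl | rfl <;> simp [cross], by linarith⟩
  · obtain ⟨τ, hτ, hsq_τ⟩ := exists_norm_sub_smul_sq_eq (e.norm_eq_one 0) w (5 / 2)
    exact ⟨τ • e 0, by rcases hτ with rfl | rfl <;> simp [cross], by linarith⟩

lemma exists_mem_cross_norm_sub_smul_le (e : OrthonormalBasis (Fin 2) ℝ E) {w : E} {r ρ : ℝ}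
    (hρ : 0 < ρ) (hr : ρ ≤ r) (hw : ‖w‖ ≤ r + ρ)
    (h : |⟪w, e 0⟫| ≤ r - ρ ∨ ‖w‖ ≤ 2 * (r - ρ)) :
    ∃ x ∈ cross e, ‖w - ρ • x‖ ≤ r := by
  obtain ⟨w, rfl⟩ : ∃ w', w = ρ • w' := ⟨ρ⁻¹ • w, (smul_inv_smul₀ hρ.ne' w).symm⟩
  obtain ⟨r, rfl⟩ : ∃ r', r = ρ * r' := ⟨ρ⁻¹ * r, (mul_inv_cancel_left₀ hρ.ne' r).symm⟩
  have hsub : ρ * r - ρ = ρ * (r - 1) := by ring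
  have hadd : ρ * r + ρ = ρ * (r + 1) := by ring
  rw [hsub, mul_left_comm, real_inner_smul_left, abs_mul, abs_of_pos hρ,
    norm_smul_of_nonneg hρ.le, mul_le_mul_iff_right₀ hρ, mul_le_mul_iff_right₀ hρ] at h
  rw [hadd, norm_smul_of_nonneg hρ.le, mul_le_mul_iff_right₀ hρ] at hw
  obtain ⟨x, hx, hle⟩ := exists_mem_cross_norm_sub_le_of_one_le e
    ((le_mul_iff_one_le_right hρ).1 hr) hw h
  refine ⟨x, hx, ?_⟩
  rw [← smul_sub, norm_smul_of_nonneg hρ.le]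
  gcongr

lemma exists_orthonormalBasis_apply_zero_eq [Fact (finrank ℝ E = 2)] {a : E} (ha : ‖a‖ = 1) :
    ∃ e : OrthonormalBasis (Fin 2) ℝ E, e 0 = a := by
  have := FiniteDimensional.of_fact_finrank_eq_two (K := ℝ) (V := E)
  obtain ⟨e, he⟩ := Orthonormal.exists_orthonormalBasis_extension_of_card_eq (𝕜 := ℝ)
    (v := fun _ : Fin 2 => a) (s := {0}) (by rw [Fintype.card_fin]; exact Fact.out)
    ⟨fun _ => ha, fun i j hij => absurd (Subsingleton.elim i j) hij⟩
  exact ⟨e, he 0 rfl⟩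

end Cross

section Stabbing

variable {E ι : Type*} [NormedAddCommGroup E] [InnerProductSpace ℝ E] [Fact (finrank ℝ E = 2)]

lemma exists_cross_stab {c : ι → E} {r : ι → ℝ} {O : E} {ρ : ℝ} (hρ : 0 < ρ)
    (hO : ∀ i, dist O (c i) ≤ r i + ρ) (h0 : 0 ∈ convexHull ℝ (reachDirections c r O ρ)) :
    ∃ e : OrthonormalBasis (Fin 2) ℝ E, ∀ i, ∃ x ∈ cross e, O + ρ • x ∈ closedBall (c i) (r i) := by
  obtain ⟨a, ha, haxis⟩ := exists_axis (fun u hu => hu.1) h0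
  obtain ⟨e, rfl⟩ := exists_orthonormalBasis_apply_zero_eq ha
  refine ⟨e, fun i => ?_⟩
  have hreach (u) (hu : u ∈ reachDirections c r O ρ) : -(r i - ρ) ≤ ⟪c i - O, u⟫ := by
    linarith [hu.2 i]
  have hri : 0 ≤ r i - ρ := nonneg_of_zero_mem_convexHull h0 hreach
  obtain ⟨x, hx, hle⟩ := exists_mem_cross_norm_sub_smul_le e hρ (sub_nonneg.1 hri)
    (dist_eq_norm' O (c i) ▸ hO i) (haxis _ _ hreach)
  refine ⟨x, hx, ?_⟩
  rwa [mem_closedBall', dist_eq_norm, ← sub_sub]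

theorem five_points_stab_pairwise_intersecting_disks_general (c : ι → E) (r : ι → ℝ)
    (hint : ∀ i j, (closedBall (c i) (r i) ∩ closedBall (c j) (r j)).Nonempty) :
    ∃ P : Finset E, P.card ≤ 5 ∧ ∀ i, ∃ p ∈ P, p ∈ closedBall (c i) (r i) := by
  classical
  have := FiniteDimensional.of_fact_finrank_eq_two (K := ℝ) (V := E)
  rcases isEmpty_or_nonempty ι with _ | _
  · exact ⟨∅, by simp, isEmptyElim⟩
  have hd (i j) : dist (c i) (c j) ≤ r i + r j :=
    dist_le_add_of_nonempty_closedBall_inter_closedBall (hint i j)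
  obtain ⟨O, hmin⟩ := exists_forall_maxExcess_le hd
  have hO := dist_le_add_maxExcess hd O
  rcases le_or_gt (maxExcess c r O) 0 with hρ | hρ
  · exact ⟨{O}, by simp, fun i => ⟨O, by simp, (hO i).trans (by linarith)⟩⟩
  obtain ⟨e, he⟩ := exists_cross_stab hρ hO (zero_mem_convexHull_reachDirections hd hmin hρ)
  exact ⟨(cross e).image (O + maxExcess c r O • ·), Finset.card_image_le.trans (card_cross_le e),
    fun i => by simpa only [Finset.exists_mem_image] using he i⟩

end Stabbing

/-- **Five piercing points for pairwise intersecting disks.**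
Let `𝒟` be a finite family of pairwise intersecting closed disks (closed balls of
positive radius) in the Euclidean plane `ℝ²`.  Then there is a set `P` of at most
five points such that every disk of the family contains at least one point of `P`. -/
theorem five_points_stab_pairwise_intersecting_disks
    (ι : Type*) [Fintype ι]
    (c : ι → EuclideanSpace ℝ (Fin 2)) (r : ι → ℝ)
    (hr : ∀ i, 0 < r i)
    (hint : ∀ i j, (Metric.closedBall (c i) (r i) ∩ Metric.closedBall (c j) (r j)).Nonempty) :
    ∃ P : Finset (EuclideanSpace ℝ (Fin 2)), P.card ≤ 5 ∧
      ∀ i, ∃ p ∈ P, p ∈ Metric.closedBall (c i) (r i) := by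
  have : Fact (finrank ℝ (EuclideanSpace ℝ (Fin 2)) = 2) := ⟨finrank_euclideanSpace_fin⟩
  exact five_points_stab_pairwise_intersecting_disks_general c r hint
end

section
/- Let D₁ and D₂ be closed disks in ℝ² with centers c₁ ≠ c₂ and radii r₁ ≥ r₂ > 0, whose boundary circles intersect at a point u with angle ∠c₁ u c₂ at least 2π/3. Then there exists a set P of at most four points in ℝ² such that every closed disk F of radius at least r₁ that intersects both D₁ and D₂ contains at least one point of P. -/
/-!
Let `m` be the foot of the perpendicular from `u` to the line `c₁c₂`, at signed distances `k` from
`c₁` and `l` from `c₂`. The angle condition forces `k ≥ r₁ / 2`, `l ≥ r₂ / 2`, and the squared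
altitude `r₁² - k² = r₂² - l²` is at most `r₁² / 4`. The points of `P` are the tips of a cross
centered at `m` with four arms of length `s = r₁`, two of them along `c₁c₂`.

One of the centers lies on the other side of `m` than `f`, say the one of radius `ρ` at distance
`l`. Up to symmetry it is `(-l, 0)` and `f = (x, y)` with `x, y ≥ 0` in the frame of the cross.
That the two disks meet says `x² + y² + 2lx ≤ R² + 2C - s²`, with `2C = 2Rρ + (ρ² - l²) + s²`. If
`C ≤ lx + s max(x, y)`, then the tip on the axis of the larger coordinate is within `R` of `f`.
Otherwise `f` is close to `m`: it lies in a triangle all of whose vertices are within `R` of that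
tip, hence so is `f` by convexity.
-/

open Module
open scoped RealInnerProductSpace

section CrossCoordinates

variable {l R s x y ρ C : ℝ}

-- `(s + 2 * R) / 3` bounds from below, linearly in `R`, where the diagonal leaves the disk.
theorem sq_add_sub_sq_le_sq_of_le_div_three {t : ℝ} (hs : 0 ≤ s) (hR : s ≤ R) (ht : 0 ≤ t)
    (htR : t ≤ (s + 2 * R) / 3) : t ^ 2 + (t - s) ^ 2 ≤ R ^ 2 := by
  rcases le_total t s with hts | hst
  · linarith [mul_nonneg ht (sub_nonneg.2 hts), pow_le_pow_left₀ hs hR 2]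
  · have ht_mul : t * (t - s) ≤ (s + 2 * R) / 3 * ((s + 2 * R) / 3 - s) :=
      mul_le_mul htR (sub_le_sub_right htR s) (sub_nonneg.2 hst) (ht.trans htR)
    linarith [mul_nonneg hs (sub_nonneg.2 hR), sq_nonneg (R - s)]

theorem sq_add_sub_sq_le_sq_of_convex_combination {a b p q : ℝ} (ha : 0 ≤ a) (hb : 0 ≤ b)
    (hab : a + b ≤ 1) (hO : s ^ 2 ≤ R ^ 2) (hp : p ^ 2 + (p - s) ^ 2 ≤ R ^ 2)
    (hq : (q - s) ^ 2 ≤ R ^ 2) : (a * p) ^ 2 + (a * p + b * q - s) ^ 2 ≤ R ^ 2 := by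
  have hc : 0 ≤ 1 - a - b := by linarith
  have jensen : (a * p) ^ 2 + (a * p + b * q - s) ^ 2 ≤
      a * (p ^ 2 + (p - s) ^ 2) + b * (q - s) ^ 2 + (1 - a - b) * s ^ 2 := by
    have gap : 0 ≤ a * b * (p ^ 2 + (p - q) ^ 2) + a * (1 - a - b) * (2 * p ^ 2) +
        b * (1 - a - b) * q ^ 2 := by positivity
    linarith
  calc (a * p) ^ 2 + (a * p + b * q - s) ^ 2
    _ ≤ a * (p ^ 2 + (p - s) ^ 2) + b * (q - s) ^ 2 + (1 - a - b) * s ^ 2 := jensen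
    _ ≤ a * R ^ 2 + b * R ^ 2 + (1 - a - b) * R ^ 2 := by gcongr
    _ = R ^ 2 := by ring

theorem sub_sq_add_sq_le_sq_of_snd_le_fst (hs : 0 ≤ s) (hl : 0 ≤ l) (hR : s ≤ R) (hy : 0 ≤ y)
    (hyx : y ≤ x) (hC : C ≤ (s + l) * ((s + 2 * R) / 3))
    (hpow : x ^ 2 + y ^ 2 + 2 * l * x ≤ R ^ 2 + 2 * C - s ^ 2) :
    (x - s) ^ 2 + y ^ 2 ≤ R ^ 2 := by
  rcases le_total x ((s + 2 * R) / 3) with hx | hx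
  · linarith [sq_add_sub_sq_le_sq_of_le_div_three hs hR (hy.trans hyx) hx,
      pow_le_pow_left₀ hy hyx 2]
  · have hfar : C ≤ (s + l) * x := hC.trans (by gcongr)
    linarith

theorem sq_add_sub_sq_le_sq_of_fst_le_snd (hs : 0 < s) (hl : 0 ≤ l) (hR : s ≤ R) (hx : 0 ≤ x)
    (hxy : x ≤ y) (hC : C ≤ (s + l) * ((s + 2 * R) / 3)) (hC' : C ≤ s * (R + s))
    (hpow : x ^ 2 + y ^ 2 + 2 * l * x ≤ R ^ 2 + 2 * C - s ^ 2) :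
    x ^ 2 + (y - s) ^ 2 ≤ R ^ 2 := by
  set p := (s + 2 * R) / 3 with hp
  have hp_pos : 0 < p := by rw [hp]; linarith
  have hq_pos : 0 < R + s := by linarith
  obtain ⟨a, rfl⟩ : ∃ a, x = a * p := ⟨x / p, by field_simp⟩
  obtain ⟨b, rfl⟩ : ∃ b, y = a * p + b * (R + s) := ⟨(y - a * p) / (R + s), by field_simp; ring⟩
  have ha : 0 ≤ a := nonneg_of_mul_nonneg_left hx hp_pos
  have hb : 0 ≤ b := nonneg_of_mul_nonneg_left (by linarith) hq_pos
  rcases le_total (a + b) 1 with hab | hab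
  · exact sq_add_sub_sq_le_sq_of_convex_combination ha hb hab (pow_le_pow_left₀ hs.le hR 2)
      (sq_add_sub_sq_le_sq_of_le_div_three hs.le hR hp_pos.le le_rfl) (by rw [add_sub_cancel_right])
  · have hfar : C ≤ a * ((s + l) * p) + b * (s * (R + s)) := by
      calc C
        _ ≤ min ((s + l) * p) (s * (R + s)) := le_min hC hC'
        _ ≤ (a + b) * min ((s + l) * p) (s * (R + s)) :=
          le_mul_of_one_le_left (by positivity) hab
        _ = a * min ((s + l) * p) (s * (R + s)) + b * min ((s + l) * p) (s * (R + s)) :=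
          add_mul _ _ _
        _ ≤ a * ((s + l) * p) + b * (s * (R + s)) := by
          gcongr
          · exact min_le_left _ _
          · exact min_le_right _ _
    linarith

theorem add_sq_le_add_sq_add_sq (hρ : 0 ≤ ρ) (hρs : ρ ≤ s) (hl : ρ / 2 ≤ l)
    (halt : ρ ^ 2 - l ^ 2 ≤ s ^ 2 / 4) : (s + ρ) ^ 2 ≤ (s + l) ^ 2 + s ^ 2 := by
  have hs : 0 ≤ s := hρ.trans hρs
  have hgap : ρ - l ≤ 3 / 8 * s := by
    rcases le_total ρ l with hρl | hlρ
    · linarith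
    · have hfactor : (ρ - l) * (3 * (ρ - l)) ≤ (ρ - l) * (ρ + l) :=
        mul_le_mul_of_nonneg_left (by linarith) (sub_nonneg.2 hlρ)
      exact le_of_sq_le_sq (by linarith [sq_nonneg s]) (by positivity)
  linarith [mul_le_mul_of_nonneg_left hgap hs]

theorem radius_mul_add_le_mul (hρ : 0 ≤ ρ) (hρs : ρ ≤ s) (hR : s ≤ R) (hl : ρ / 2 ≤ l)
    (halt : ρ ^ 2 - l ^ 2 ≤ s ^ 2 / 4) :
    R * ρ + (ρ ^ 2 - l ^ 2 + s ^ 2) / 2 ≤ (s + l) * ((s + 2 * R) / 3) := by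
  have hslope : ρ * (R - s) ≤ 2 / 3 * (s + l) * (R - s) := by
    gcongr
    linarith
  linarith [add_sq_le_add_sq_add_sq hρ hρs hl halt]

theorem sub_sq_add_sq_le_sq_or_sq_add_sub_sq_le_sq (hs : 0 < s) (hρ : 0 ≤ ρ) (hρs : ρ ≤ s)
    (hR : s ≤ R) (hl : ρ / 2 ≤ l) (halt : ρ ^ 2 - l ^ 2 ≤ s ^ 2 / 4) (hx : 0 ≤ x) (hy : 0 ≤ y)
    (hmeet : (x + l) ^ 2 + y ^ 2 ≤ (R + ρ) ^ 2) :
    (x - s) ^ 2 + y ^ 2 ≤ R ^ 2 ∨ x ^ 2 + (y - s) ^ 2 ≤ R ^ 2 := by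
  have hl₀ : 0 ≤ l := by linarith
  have hC := radius_mul_add_le_mul hρ hρs hR hl halt
  have hpow : x ^ 2 + y ^ 2 + 2 * l * x ≤
      R ^ 2 + 2 * (R * ρ + (ρ ^ 2 - l ^ 2 + s ^ 2) / 2) - s ^ 2 := by linarith
  rcases le_total y x with hyx | hxy
  · exact .inl (sub_sq_add_sq_le_sq_of_snd_le_fst hs.le hl₀ hR hy hyx hC hpow)
  · have hC' : R * ρ + (ρ ^ 2 - l ^ 2 + s ^ 2) / 2 ≤ s * (R + s) := by
      linarith [mul_le_mul_of_nonneg_left hρs (hs.le.trans hR), sq_nonneg s]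
    exact .inr (sq_add_sub_sq_le_sq_of_fst_le_snd hs hl₀ hR hx hxy hC hC' hpow)

end CrossCoordinates

section ObtuseTriangle

variable {V P : Type*} [NormedAddCommGroup V] [InnerProductSpace ℝ V] {x y : V}

theorem two_mul_inner_le_of_two_pi_div_three_le_angle
    (h : 2 * Real.pi / 3 ≤ InnerProductGeometry.angle x y) :
    2 * ⟪x, y⟫ ≤ -(‖x‖ * ‖y‖) := by
  have hcos : Real.cos (InnerProductGeometry.angle x y) ≤ -(1 / 2) := by
    calc Real.cos (InnerProductGeometry.angle x y)
      _ ≤ Real.cos (2 * Real.pi / 3) :=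
        Real.cos_le_cos_of_nonneg_of_le_pi (by positivity) (InnerProductGeometry.angle_le_pi x y) h
      _ = -(1 / 2) := by
        rw [show 2 * Real.pi / 3 = Real.pi - Real.pi / 3 by ring, Real.cos_pi_sub,
          Real.cos_pi_div_three]
  rw [← InnerProductGeometry.cos_angle_mul_norm_mul_norm]
  linarith [mul_le_mul_of_nonneg_right hcos (mul_nonneg (norm_nonneg x) (norm_nonneg y))]

theorem norm_div_two_le_inner_sub_div_norm_sub (h : 2 * ⟪x, y⟫ ≤ -(‖x‖ * ‖y‖)) (hxy : x ≠ y) :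
    ‖x‖ / 2 ≤ ⟪x, x - y⟫ / ‖x - y‖ := by
  rw [le_div_iff₀ (norm_sub_pos_iff.2 hxy), inner_sub_right, real_inner_self_eq_norm_sq]
  nlinarith [mul_le_mul_of_nonneg_left (norm_sub_le x y) (norm_nonneg x)]

theorem norm_sq_sub_inner_sub_div_norm_sub_sq_le {s : ℝ} (h : 2 * ⟪x, y⟫ ≤ -(‖x‖ * ‖y‖))
    (hxy : x ≠ y) (hx : ‖x‖ ≤ s) (hy : ‖y‖ ≤ s) :
    ‖x‖ ^ 2 - (⟪x, x - y⟫ / ‖x - y‖) ^ 2 ≤ s ^ 2 / 4 := by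
  have hd : 0 < ‖x - y‖ := norm_sub_pos_iff.2 hxy
  have hside : ‖x‖ ^ 2 + ‖x‖ * ‖y‖ + ‖y‖ ^ 2 ≤ ‖x - y‖ ^ 2 := by
    rw [norm_sub_sq_real]; linarith
  have hgram : ‖x‖ ^ 2 * ‖x - y‖ ^ 2 - ⟪x, x - y⟫ ^ 2 = ‖x‖ ^ 2 * ‖y‖ ^ 2 - ⟪x, y⟫ ^ 2 := by
    rw [norm_sub_sq_real, inner_sub_right, real_inner_self_eq_norm_sq]; ring
  have hinner : (‖x‖ * ‖y‖) ^ 2 ≤ (2 * ⟪x, y⟫) ^ 2 := by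
    rw [← neg_sq (2 * ⟪x, y⟫)]
    exact pow_le_pow_left₀ (by positivity) (by linarith) 2
  have hs : 0 ≤ s := (norm_nonneg x).trans hx
  have hprod : 3 * (‖x‖ ^ 2 * ‖y‖ ^ 2) ≤ s ^ 2 * ‖x - y‖ ^ 2 :=
    calc 3 * (‖x‖ ^ 2 * ‖y‖ ^ 2)
      _ = ‖x‖ ^ 2 * ‖y‖ ^ 2 + (‖x‖ * ‖y‖) * (‖x‖ * ‖y‖) + ‖x‖ ^ 2 * ‖y‖ ^ 2 := by ring
      _ ≤ ‖x‖ ^ 2 * s ^ 2 + (‖x‖ * ‖y‖) * (s * s) + s ^ 2 * ‖y‖ ^ 2 := by gcongr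
      _ = s ^ 2 * (‖x‖ ^ 2 + ‖x‖ * ‖y‖ + ‖y‖ ^ 2) := by ring
      _ ≤ s ^ 2 * ‖x - y‖ ^ 2 := by gcongr
  rw [div_pow, sub_le_iff_le_add, ← sub_le_iff_le_add', le_div_iff₀ (by positivity)]
  linarith

theorem inner_sub_div_norm_sub_add (x y : V) :
    ⟪x, x - y⟫ / ‖x - y‖ + ⟪y, y - x⟫ / ‖y - x‖ = ‖x - y‖ := by
  rw [norm_sub_rev y, ← add_div, ← neg_sub x y, inner_neg_right, ← sub_eq_add_neg,
    ← inner_sub_left, real_inner_self_eq_norm_mul_norm, mul_self_div_self]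

variable [MetricSpace P] [NormedAddTorsor V P]

theorem exists_altitude_foot {c₁ c₂ u : P} {r₁ r₂ : ℝ} (hr₂ : 0 < r₂) (hr : r₂ ≤ r₁)
    (hu₁ : dist u c₁ = r₁) (hu₂ : dist u c₂ = r₂)
    (hangle : 2 * Real.pi / 3 ≤ EuclideanGeometry.angle c₁ u c₂) :
    ∃ (m : P) (e : V) (k l : ℝ), ‖e‖ = 1 ∧ m -ᵥ c₁ = k • e ∧ m -ᵥ c₂ = l • -e ∧
      r₁ / 2 ≤ k ∧ r₂ / 2 ≤ l ∧ r₁ ^ 2 - k ^ 2 ≤ r₁ ^ 2 / 4 ∧ r₂ ^ 2 - l ^ 2 ≤ r₁ ^ 2 / 4 := by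
  set x := c₁ -ᵥ u
  set y := c₂ -ᵥ u
  have hxr : ‖x‖ = r₁ := by rw [← hu₁, dist_eq_norm_vsub']
  have hyr : ‖y‖ = r₂ := by rw [← hu₂, dist_eq_norm_vsub']
  have hxy : 2 * ⟪x, y⟫ ≤ -(‖x‖ * ‖y‖) := two_mul_inner_le_of_two_pi_div_three_le_angle hangle
  have hyx : 2 * ⟪y, x⟫ ≤ -(‖y‖ * ‖x‖) := by rwa [real_inner_comm, mul_comm ‖y‖]
  have hne : x ≠ y := by
    intro heq
    rw [← heq, real_inner_self_eq_norm_mul_norm] at hxy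
    nlinarith
  have hd : ‖x - y‖ ≠ 0 := norm_sub_eq_zero_iff.not.2 hne
  set e := ‖x - y‖⁻¹ • (y - x)
  set k := ⟪x, x - y⟫ / ‖x - y‖
  set l := ⟪y, y - x⟫ / ‖y - x‖
  have hkl : c₁ -ᵥ c₂ = -((k + l) • e) := by
    rw [inner_sub_div_norm_sub_add, smul_inv_smul₀ hd, neg_sub, vsub_sub_vsub_cancel_right]
  refine ⟨k • e +ᵥ c₁, e, k, l, ?_, vadd_vsub _ _, ?_, ?_, ?_, ?_, ?_⟩
  · rw [norm_smul, norm_inv, norm_norm, norm_sub_rev y, inv_mul_cancel₀ hd]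
  · rw [vadd_vsub_assoc, hkl]
    module
  · simpa only [hxr] using norm_div_two_le_inner_sub_div_norm_sub hxy hne
  · simpa only [hyr] using norm_div_two_le_inner_sub_div_norm_sub hyx hne.symm
  · simpa only [hxr] using
      norm_sq_sub_inner_sub_div_norm_sub_sq_le hxy hne hxr.le (hyr.trans_le hr)
  · simpa only [hyr] using
      norm_sq_sub_inner_sub_div_norm_sub_sq_le hyx hne.symm (hyr.trans_le hr) hxr.le

end ObtuseTriangle

section Cross

variable {V P : Type*} [NormedAddCommGroup V] [InnerProductSpace ℝ V] [Fact (finrank ℝ V = 2)]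
  [MetricSpace P] [NormedAddTorsor V P] (o : Orientation ℝ V (Fin 2))

local notation "J" => o.rightAngleRotation
local notation "ω" => o.areaForm

open Classical in
/-- The four tips of the cross with center `m` whose arms are the vector `w` and its rotations by
multiples of a right angle. These are the points that stab all large disks. -/
noncomputable def crossTips (m : P) (w : V) : Finset P :=
  {w +ᵥ m, -w +ᵥ m, J w +ᵥ m, -J w +ᵥ m}

theorem card_crossTips_le (m : P) (w : V) : (crossTips o m w).card ≤ 4 := by
  classical exact Finset.card_le_four

theorem crossTips_neg (m : P) (w : V) : crossTips o m (-w) = crossTips o m w := by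
  ext p
  simp only [crossTips, map_neg, neg_neg, Finset.mem_insert, Finset.mem_singleton]
  tauto

theorem norm_sub_smul_add_smul_rightAngleRotation_sq {e : V} (he : ‖e‖ = 1) (v : V) (a b : ℝ) :
    ‖v - (a • e + b • J e)‖ ^ 2 = (⟪e, v⟫ - a) ^ 2 + (ω e v - b) ^ 2 := by
  have h := o.inner_sq_add_areaForm_sq e (v - (a • e + b • J e))
  simpa [he, inner_sub_right, inner_add_right, inner_smul_right] using h.symm

theorem exists_mem_crossTips_mem_closedBall {m c f : P} {e : V} {l ρ s R : ℝ} (he : ‖e‖ = 1)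
    (hmc : m -ᵥ c = l • e) (hs : 0 < s) (hρ : 0 ≤ ρ) (hρs : ρ ≤ s) (hR : s ≤ R) (hl : ρ / 2 ≤ l)
    (halt : ρ ^ 2 - l ^ 2 ≤ s ^ 2 / 4) (hside : 0 ≤ ⟪e, f -ᵥ m⟫) (hmeet : dist f c ≤ R + ρ) :
    ∃ p ∈ crossTips o m (s • e), p ∈ Metric.closedBall f R := by
  have hR₀ : 0 ≤ R := hs.le.trans hR
  have tip (a b : ℝ) (h : (⟪e, f -ᵥ m⟫ - a) ^ 2 + (ω e (f -ᵥ m) - b) ^ 2 ≤ R ^ 2) :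
      (a • e + b • J e) +ᵥ m ∈ Metric.closedBall f R := by
    rw [← norm_sub_smul_add_smul_rightAngleRotation_sq o he] at h
    rw [Metric.mem_closedBall', dist_eq_norm_vsub, vsub_vadd_eq_vsub_sub]
    exact le_of_sq_le_sq h hR₀
  have hmeet' : (⟪e, f -ᵥ m⟫ + l) ^ 2 + |ω e (f -ᵥ m)| ^ 2 ≤ (R + ρ) ^ 2 := by
    have hfc : f -ᵥ c = (f -ᵥ m) - ((-l) • e + (0 : ℝ) • J e) := by
      rw [← vsub_add_vsub_cancel f m c, hmc]
      module
    rw [dist_eq_norm_vsub, hfc] at hmeet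
    have := pow_le_pow_left₀ (norm_nonneg _) hmeet 2
    rwa [norm_sub_smul_add_smul_rightAngleRotation_sq o he, sub_neg_eq_add, sub_zero,
      ← sq_abs (ω _ _)] at this
  rcases sub_sq_add_sq_le_sq_or_sq_add_sub_sq_le_sq hs hρ hρs hR hl halt hside (abs_nonneg _)
    hmeet' with h | h
  · exact ⟨s • e +ᵥ m, by simp [crossTips], by simpa using tip s 0 (by simpa using h)⟩
  · rcases abs_choice (ω e (f -ᵥ m)) with hY | hY
    · exact ⟨s • J e +ᵥ m, by simp [crossTips], by
        simpa using tip 0 s (by simpa [hY] using h)⟩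
    · exact ⟨-(s • J e) +ᵥ m, by simp [crossTips], by
        simpa using tip 0 (-s) (by rw [hY] at h; linarith)⟩

end Cross

theorem four_points_stab_large_disks_general {V P : Type*} [NormedAddCommGroup V]
    [InnerProductSpace ℝ V] [Fact (finrank ℝ V = 2)] [MetricSpace P] [NormedAddTorsor V P]
    {c₁ c₂ u : P} {r₁ r₂ : ℝ} (hr₂ : 0 < r₂) (hr : r₂ ≤ r₁)
    (hu₁ : dist u c₁ = r₁) (hu₂ : dist u c₂ = r₂)
    (hangle : 2 * Real.pi / 3 ≤ EuclideanGeometry.angle c₁ u c₂) :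
    ∃ S : Finset P, S.card ≤ 4 ∧
      ∀ (f : P) (R : ℝ), r₁ ≤ R →
        (Metric.closedBall f R ∩ Metric.closedBall c₁ r₁).Nonempty →
        (Metric.closedBall f R ∩ Metric.closedBall c₂ r₂).Nonempty →
        ∃ p ∈ S, p ∈ Metric.closedBall f R := by
  have : FiniteDimensional ℝ V := .of_fact_finrank_eq_two
  let o : Orientation ℝ V (Fin 2) := (finBasisOfFinrankEq ℝ V Fact.out).orientation
  have hr₁ : 0 < r₁ := hr₂.trans_le hr
  obtain ⟨m, e, k, l, he, hmc₁, hmc₂, hk, hl, halt₁, halt₂⟩ :=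
    exists_altitude_foot hr₂ hr hu₁ hu₂ hangle
  refine ⟨crossTips o m (r₁ • e), card_crossTips_le o m _, fun f R hR hF₁ hF₂ => ?_⟩
  rcases le_total 0 ⟪e, f -ᵥ m⟫ with hside | hside
  · exact exists_mem_crossTips_mem_closedBall o he hmc₁ hr₁ hr₁.le le_rfl hR hk halt₁ hside
      (Metric.dist_le_add_of_nonempty_closedBall_inter_closedBall hF₁)
  · rw [← crossTips_neg, ← smul_neg]
    exact exists_mem_crossTips_mem_closedBall o ((norm_neg e).trans he) hmc₂ hr₁ hr₂.le hr hR hl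
      halt₂ (by rwa [inner_neg_left, neg_nonneg])
      (Metric.dist_le_add_of_nonempty_closedBall_inter_closedBall hF₂)

/-- **Lemma (four points stab all large disks meeting two disks with large lens angle).**
Let `D₁`, `D₂` be closed disks with centers `c₁ ≠ c₂` and radii `r₁ ≥ r₂ > 0`, whose
boundary circles meet at a point `u` with lens angle `∠ c₁ u c₂ ≥ 2π/3`.  Then there
is a set `P` of at most four points such that every closed disk `F` of radius at least
`r₁` intersecting both `D₁` and `D₂` contains a point of `P`. -/
theorem four_points_stab_large_disks
    (c₁ c₂ : EuclideanSpace ℝ (Fin 2)) (r₁ r₂ : ℝ)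
    (hc : c₁ ≠ c₂) (hr₂ : 0 < r₂) (hr : r₂ ≤ r₁)
    (u : EuclideanSpace ℝ (Fin 2))
    (hu₁ : dist u c₁ = r₁) (hu₂ : dist u c₂ = r₂)
    (hangle : 2 * Real.pi / 3 ≤ EuclideanGeometry.angle c₁ u c₂) :
    ∃ P : Finset (EuclideanSpace ℝ (Fin 2)), P.card ≤ 4 ∧
      ∀ (f : EuclideanSpace ℝ (Fin 2)) (R : ℝ), r₁ ≤ R →
        (Metric.closedBall f R ∩ Metric.closedBall c₁ r₁).Nonempty →
        (Metric.closedBall f R ∩ Metric.closedBall c₂ r₂).Nonempty →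
        ∃ p ∈ P, p ∈ Metric.closedBall f R := by
  have : Fact (finrank ℝ (EuclideanSpace ℝ (Fin 2)) = 2) := ⟨finrank_euclideanSpace_fin⟩
  exact four_points_stab_large_disks_general hr₂ hr hu₁ hu₂ hangle
end

section
/- There exists a set of 13 pairwise intersecting closed disks in ℝ² that cannot be stabbed by three points: for every set P of at most three points in ℝ², some disk of the family contains no point of P. -/
/-!
Eight *outer* disks touch a base disk from outside at distinct points, and four further disks are
slight perturbations of the base disk which still meet all outer disks; these four and the base disk
are called *central*. The outer disks need three points: if two points stab three given ones of
them, then one of the points lies in two of these three, and for a suitable choice of the three each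
such lens misses three outer disks that have no point in common.

Suppose that three points stab everything. A point common to all central disks lies in no outer
disk, so if there were one among the three, the other two would stab the outer disks. Hence at least
two of the points lie in central disks, and each of these two is in at most one outer disk.
Replacing them by a single point common to the two outer disks in question, we again stab the outer
disks with two points.
-/

open Metric Finset

section Stabbing

variable {α ι κ : Type*}

/-- The finite set `P` stabs the family `F`: every member of `F` contains a point of `P`. -/
def Stabs (P : Finset α) (F : ι → Set α) : Prop :=
  ∀ i, ∃ p ∈ P, p ∈ F i

/-- The family `F` is stabbed by some set of at most `n` points. -/
def Stabbable (n : ℕ) (F : ι → Set α) : Prop :=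
  ∃ P : Finset α, #P ≤ n ∧ Stabs P F

theorem Stabs.stabbable_of_forall_notMem {n : ℕ} {P : Finset α} {F : ι → Set α} {p : α}
    (hP : Stabs P F) (hcard : #P ≤ n + 1) (hpP : p ∈ P) (hp : ∀ i, p ∉ F i) : Stabbable n F := by
  classical
  refine ⟨P.erase p, ?_, fun i ↦ ?_⟩
  · rw [card_erase_of_mem hpP]
    exact Nat.sub_le_of_le_add hcard
  · obtain ⟨q, hqP, hq⟩ := hP i
    exact ⟨q, mem_erase.2 ⟨fun h ↦ hp i (h ▸ hq), hqP⟩, hq⟩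

theorem not_stabbable_one_of_inter_eq_empty {F : ι → Set α} {i j k : ι} (h : F i ∩ F j ∩ F k = ∅) :
    ¬ Stabbable 1 F := by
  rintro ⟨P, hcard, hP⟩
  obtain ⟨p, hpP, hp⟩ := hP i
  obtain ⟨q, hqP, hq⟩ := hP j
  obtain ⟨r, hrP, hr⟩ := hP k
  obtain rfl : p = q := card_le_one.1 hcard p hpP q hqP
  obtain rfl : p = r := card_le_one.1 hcard p hpP r hrP
  exact Set.eq_empty_iff_forall_notMem.1 h p ⟨⟨hp, hq⟩, hr⟩

theorem not_stabbable_succ_of_forall_mem_inter {n : ℕ} {F : ι → Set α} (b : Fin (n + 2) → ι)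
    (h : ∀ i j, i ≠ j → ∀ p ∈ F (b i) ∩ F (b j),
      ¬ Stabbable n fun x : {x // p ∉ F x} ↦ F x) :
    ¬ Stabbable (n + 1) F := by
  rintro ⟨P, hcard, hP⟩
  choose f hfP hf using hP
  obtain ⟨i, -, j, -, hij, hfij⟩ := exists_ne_map_eq_of_card_lt_of_maps_to
    (s := univ) (t := P) (f := f ∘ b) (by rw [card_univ, Fintype.card_fin]; lia)
    fun i _ ↦ hfP (b i)
  have hfij : f (b i) = f (b j) := hfij
  have hmem : f (b i) ∈ F (b i) ∩ F (b j) := ⟨hf _, by rw [hfij]; exact hf (b j)⟩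
  have hPmiss : Stabs P fun x : {x // f (b i) ∉ F x} ↦ F x := fun x ↦ ⟨f x, hfP x, hf x⟩
  exact h i j hij _ hmem (hPmiss.stabbable_of_forall_notMem hcard (hfP _) (·.2))

theorem exists_replacement_of_subsingleton {T : ι → Set α} {p q : α}
    (hmeet : ∀ i i', (T i ∩ T i').Nonempty)
    (hp : {i | p ∈ T i}.Subsingleton) (hq : {i | q ∈ T i}.Subsingleton) :
    ∃ z, ∀ i, p ∈ T i ∨ q ∈ T i → z ∈ T i := by
  by_cases hpT : ∃ a, p ∈ T a
  · by_cases hqT : ∃ b, q ∈ T b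
    · obtain ⟨a, ha⟩ := hpT
      obtain ⟨b, hb⟩ := hqT
      obtain ⟨z, hza, hzb⟩ := hmeet a b
      exact ⟨z, fun i hi ↦ hi.elim (fun h ↦ hp ha h ▸ hza) (fun h ↦ hq hb h ▸ hzb)⟩
    · exact ⟨p, fun i hi ↦ hi.resolve_right fun h ↦ hqT ⟨i, h⟩⟩
  · exact ⟨q, fun i hi ↦ hi.resolve_left fun h ↦ hpT ⟨i, h⟩⟩

theorem Stabs.stabbable_of_replacement {n : ℕ} {P : Finset α} {T : ι → Set α} {p q z : α}
    (hP : Stabs P T) (hcard : #P ≤ n + 1) (hpP : p ∈ P) (hqP : q ∈ P) (hpq : q ≠ p)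
    (hz : ∀ i, p ∈ T i ∨ q ∈ T i → z ∈ T i) : Stabbable n T := by
  classical
  refine ⟨insert z ((P.erase p).erase q), ?_, fun i ↦ ?_⟩
  · have hq : q ∈ P.erase p := mem_erase.2 ⟨hpq, hqP⟩
    have := card_insert_le z ((P.erase p).erase q)
    have := card_erase_add_one hq
    have := card_erase_add_one hpP
    lia
  · obtain ⟨r, hrP, hr⟩ := hP i
    by_cases h : r = p ∨ r = q
    · exact ⟨z, mem_insert_self _ _,
        hz i (by rcases h with rfl | rfl <;> simp only [hr, true_or, or_true])⟩
    · rw [not_or] at h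
      exact ⟨r, mem_insert_of_mem (mem_erase.2 ⟨h.2, mem_erase.2 ⟨h.1, hrP⟩⟩), hr⟩

theorem not_stabbable_succ_sumElim [Nonempty κ] {n : ℕ} {A : κ → Set α} {T : ι → Set α}
    (hmeet : ∀ i i', (T i ∩ T i').Nonempty)
    (hsub : ∀ j, ∀ p ∈ A j, {i | p ∈ T i}.Subsingleton)
    (hmiss : ∀ p ∈ ⋂ j, A j, ∀ i, p ∉ T i)
    (hT : ¬ Stabbable n T) : ¬ Stabbable (n + 1) (Sum.elim A T) := by
  rintro ⟨P, hcard, hP⟩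
  have hPT : Stabs P T := fun i ↦ hP (Sum.inr i)
  obtain ⟨p, hpP, hp⟩ := hP (Sum.inl (Classical.arbitrary κ))
  by_cases hall : p ∈ ⋂ j, A j
  · exact hT (hPT.stabbable_of_forall_notMem hcard hpP (hmiss p hall))
  · obtain ⟨j, hj⟩ : ∃ j, p ∉ A j := by simpa only [Set.mem_iInter, not_forall] using hall
    obtain ⟨q, hqP, hq⟩ := hP (Sum.inl j)
    have hqp : q ≠ p := fun h ↦ hj (h ▸ hq)
    obtain ⟨z, hz⟩ :=
      exists_replacement_of_subsingleton hmeet (hsub _ p hp) (hsub j q hq)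
    exact hT (hPT.stabbable_of_replacement hcard hpP hqP hqp hz)

end Stabbing

section WeightedPower

variable {E ι : Type*} [NormedAddCommGroup E] [InnerProductSpace ℝ E]

theorem sum_mul_norm_sub_sq (s : Finset ι) (w : ι → ℝ) (c : ι → E) (p : E) :
    (∑ i ∈ s, w i) * ∑ i ∈ s, w i * ‖p - c i‖ ^ 2 =
      ‖(∑ i ∈ s, w i) • p - ∑ i ∈ s, w i • c i‖ ^ 2
        + ((∑ i ∈ s, w i) * ∑ i ∈ s, w i * ‖c i‖ ^ 2 - ‖∑ i ∈ s, w i • c i‖ ^ 2) := by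
  have hexpand : ∑ i ∈ s, w i * ‖p - c i‖ ^ 2 =
      (∑ i ∈ s, w i) * ‖p‖ ^ 2 - 2 * inner ℝ p (∑ i ∈ s, w i • c i)
        + ∑ i ∈ s, w i * ‖c i‖ ^ 2 := by
    simp only [norm_sub_sq_real, inner_sum, inner_smul_right, sum_mul, mul_sum,
      ← sum_sub_distrib, ← sum_add_distrib]
    exact sum_congr rfl fun i _ ↦ by ring
  rw [hexpand, norm_sub_sq_real, norm_smul, real_inner_smul_left, mul_pow, Real.norm_eq_abs,
    sq_abs]
  ring

/-- By `sum_mul_norm_sub_sq`, the assumption `h` makes the `w`-weighted sum of the powers of a point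
with respect to the spheres positive everywhere. -/
theorem iInter_closedBall_eq_empty_of_weights [Fintype ι] {w : ι → ℝ} {c : ι → E} {r : ι → ℝ}
    (hw : ∀ i, 0 ≤ w i)
    (h : ‖∑ i, w i • c i‖ ^ 2 < (∑ i, w i) * ∑ i, w i * (‖c i‖ ^ 2 - r i ^ 2)) :
    ⋂ i, closedBall (c i) (r i) = ∅ := by
  refine Set.eq_empty_iff_forall_notMem.2 fun p hp ↦ ?_
  have hle : ∑ i, w i * ‖p - c i‖ ^ 2 ≤ ∑ i, w i * r i ^ 2 := by
    refine sum_le_sum fun i _ ↦ mul_le_mul_of_nonneg_left ?_ (hw i)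
    have : ‖p - c i‖ ≤ r i := mem_closedBall_iff_norm.1 (Set.mem_iInter.1 hp i)
    gcongr
  have hW := mul_le_mul_of_nonneg_left hle (sum_nonneg fun i (_ : i ∈ univ) ↦ hw i)
  rw [sum_mul_norm_sub_sq] at hW
  simp only [mul_sub, sum_sub_distrib] at h
  linarith [sq_nonneg ‖(∑ i, w i) • p - ∑ i, w i • c i‖]

end WeightedPower

/-- A disk of the plane with integral center `(x, y)` and integral radius `r`, so that inequalities
between such data are decidable. -/
structure IntDisk where
  x : ℤ
  y : ℤ
  r : ℤ

namespace IntDisk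

/-- The center of the disk, as a point of the Euclidean plane. -/
def center (D : IntDisk) : EuclideanSpace ℝ (Fin 2) :=
  !₂[(D.x : ℝ), (D.y : ℝ)]

/-- The closed disk itself, as a set of points. -/
def toSet (D : IntDisk) : Set (EuclideanSpace ℝ (Fin 2)) :=
  closedBall D.center D.r

/-- The inner product of the vectors from the center of `A` to the centers of `B` and `C`. -/
def innerFrom (A B C : IntDisk) : ℤ :=
  (B.x - A.x) * (C.x - A.x) + (B.y - A.y) * (C.y - A.y)

/-- The power of the origin with respect to the boundary circle. -/
def originPower (D : IntDisk) : ℤ :=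
  D.x ^ 2 + D.y ^ 2 - D.r ^ 2

/-- Homogeneous barycentric coordinates, in the triangle of the centers, of the radical center of
the three boundary circles. At that point the three powers agree, which makes it the best choice of
weights in `iInter_closedBall_eq_empty_of_weights`. -/
def radicalWeights (A B C : IntDisk) : Fin 3 → ℤ :=
  let bb := innerFrom A B B
  let bc := innerFrom A B C
  let cc := innerFrom A C C
  let β := bb + A.r ^ 2 - B.r ^ 2
  let γ := cc + A.r ^ 2 - C.r ^ 2
  let v := β * cc - γ * bc
  let w := γ * bb - β * bc
  ![2 * (bb * cc - bc ^ 2) - v - w, v, w]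

/-- A decidable certificate that three disks have no common point: the hypotheses of
`iInter_closedBall_eq_empty_of_weights` hold for the weights `radicalWeights A B C`. -/
def RadicallySeparated (A B C : IntDisk) : Prop :=
  let w := radicalWeights A B C
  (∀ i, 0 ≤ w i) ∧
    (w 0 * A.x + w 1 * B.x + w 2 * C.x) ^ 2 + (w 0 * A.y + w 1 * B.y + w 2 * C.y) ^ 2 <
      (w 0 + w 1 + w 2) *
        (w 0 * A.originPower + w 1 * B.originPower + w 2 * C.originPower)

instance (A B C : IntDisk) : Decidable (RadicallySeparated A B C) :=
  inferInstanceAs (Decidable (_ ∧ _))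

theorem RadicallySeparated.inter_eq_empty {A B C : IntDisk} (h : RadicallySeparated A B C) :
    A.toSet ∩ B.toSet ∩ C.toSet = ∅ := by
  obtain ⟨hw, hlt⟩ := h
  generalize radicalWeights A B C = w at hw hlt
  have hempty := iInter_closedBall_eq_empty_of_weights (w := fun i ↦ (w i : ℝ))
    (c := fun i ↦ (![A, B, C] i).center) (r := fun i ↦ (![A, B, C] i).r)
    (fun i ↦ Int.cast_nonneg (hw i)) (by
      rw [originPower, originPower, originPower] at hlt
      simpa [Fin.sum_univ_three, EuclideanSpace.norm_sq_eq, center] using mod_cast hlt)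
  rw [← hempty]
  ext p
  simp [toSet, Fin.forall_fin_succ, and_assoc]

theorem RadicallySeparated.notMem {A B C : IntDisk} (h : RadicallySeparated A B C)
    {p : EuclideanSpace ℝ (Fin 2)} (hA : p ∈ A.toSet) (hB : p ∈ B.toSet) : p ∉ C.toSet :=
  fun hC ↦ Set.eq_empty_iff_forall_notMem.1 h.inter_eq_empty p ⟨⟨hA, hB⟩, hC⟩

theorem inter_nonempty_of_sq_le {D D' : IntDisk} (hr : 0 ≤ D.r) (hr' : 0 ≤ D'.r)
    (h : innerFrom D D' D' ≤ (D.r + D'.r) ^ 2) : (D.toSet ∩ D'.toSet).Nonempty := by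
  have hR : (0 : ℝ) ≤ D.r := Int.cast_nonneg hr
  have hR' : (0 : ℝ) ≤ D'.r := Int.cast_nonneg hr'
  have hdist : dist D.center D'.center ≤ D.r + D'.r := by
    have hsq : dist D.center D'.center ^ 2 = innerFrom D D' D' := by
      rw [dist_comm, EuclideanSpace.dist_sq_eq]
      simp [Real.dist_eq, center, innerFrom, sq]
    refine le_of_sq_le_sq ?_ (by positivity)
    rw [hsq]
    exact_mod_cast h
  rw [← Set.not_disjoint_iff_nonempty_inter, toSet, toSet,
    disjoint_closedBall_closedBall_iff hR hR', not_lt]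
  exact hdist

end IntDisk

open IntDisk

/-- The disks `B₁, B₂, B₃, V, W, V', Z, Z'`, tangent up to rounding to `centralDisk 0`. The lens
`B₁ ∩ B₂` misses `B₃, V, W`, the lens `B₁ ∩ B₃` misses `B₂, V', W`, and the lens `B₂ ∩ B₃` misses
`B₁, Z, Z'`; none of these three triples has a common point. The coordinates come from a
numerical search; the rounded radii are enlarged slightly so that tangent disks still meet. -/
def outerDisk : Fin 8 → IntDisk :=
  ![⟨-32531477401, -30797347431, 34797027030⟩,
    ⟨17431111771, -19781319063, 16365588208⟩,
    ⟨0, -12518182772, 2518182773⟩,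
    ⟨-24995573612, -26783300803, 26635009243⟩,
    ⟨3848513484, -14546943572, 5047412514⟩,
    ⟨-69969647465, -58553736274, 81237555854⟩,
    ⟨47202815877, -41645932285, 52948308181⟩,
    ⟨-2224273039, -13958142729, 4134254103⟩]

/-- A base disk, followed by four disks each of which is tangent up to rounding to the two disks of
one of the pairs `{B₁, V}`, `{V', Z}`, `{B₂, W}`, `{B₃, Z'}` of outer disks, at points off the base
disk. -/
def centralDisk : Fin 5 → IntDisk :=
  ![⟨0, 0, 10000000001⟩,
    ⟨19003424, 19139486, 10026958379⟩,
    ⟨-226676, -17370957, 9988678917⟩,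
    ⟨-2281736, 4272802, 10004714308⟩,
    ⟨1563092, 19740839, 10019740938⟩]

/-- The family of all thirteen disks. -/
def disk : Fin 5 ⊕ Fin 8 → IntDisk :=
  Sum.elim centralDisk outerDisk

theorem disk_r_pos : ∀ i, 0 < (disk i).r := by decide +kernel

theorem disk_r_injective : Function.Injective fun i ↦ (disk i).r := by
  unfold Function.Injective
  decide +kernel

theorem disk_inter_nonempty (i j : Fin 5 ⊕ Fin 8) :
    ((disk i).toSet ∩ (disk j).toSet).Nonempty := by
  have h : ∀ i j, innerFrom (disk i) (disk j) (disk j) ≤ ((disk i).r + (disk j).r) ^ 2 := by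
    decide +kernel
  exact inter_nonempty_of_sq_le (disk_r_pos i).le (disk_r_pos j).le (h i j)

theorem outerDisk_not_stabbable_two : ¬ Stabbable 2 fun i ↦ (outerDisk i).toSet := by
  have hlens : ∀ i j : Fin 3, i ≠ j → ∃ x y z : Fin 8,
      (∀ k ∈ [x, y, z], RadicallySeparated (outerDisk (i.castLE (by simp)))
        (outerDisk (j.castLE (by simp))) (outerDisk k)) ∧
      RadicallySeparated (outerDisk x) (outerDisk y) (outerDisk z) := by
    decide +kernel
  refine not_stabbable_succ_of_forall_mem_inter (Fin.castLE (by simp)) fun i j hij p hp ↦ ?_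
  obtain ⟨x, y, z, hmiss, hxyz⟩ := hlens i j hij
  have hp' : ∀ k ∈ [x, y, z], p ∉ (outerDisk k).toSet := fun k hk ↦
    (hmiss k hk).notMem hp.1 hp.2
  exact not_stabbable_one_of_inter_eq_empty (i := ⟨x, hp' x (by simp)⟩) (j := ⟨y, hp' y (by simp)⟩)
    (k := ⟨z, hp' z (by simp)⟩) hxyz.inter_eq_empty

theorem subsingleton_outerDisk_of_mem_centralDisk (j : Fin 5) (p : EuclideanSpace ℝ (Fin 2))
    (hp : p ∈ (centralDisk j).toSet) : {i | p ∈ (outerDisk i).toSet}.Subsingleton := by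
  have h : ∀ j i i', i ≠ i' →
      RadicallySeparated (centralDisk j) (outerDisk i) (outerDisk i') := by
    decide +kernel
  intro i hi i' hi'
  by_contra hne
  exact (h j i i' hne).notMem hp hi hi'

theorem notMem_outerDisk_of_mem_iInter_centralDisk (p : EuclideanSpace ℝ (Fin 2))
    (hp : p ∈ ⋂ j, (centralDisk j).toSet) (i : Fin 8) : p ∉ (outerDisk i).toSet := by
  have h : ∀ i, ∃ j, RadicallySeparated (centralDisk 0) (centralDisk j) (outerDisk i) := by
    decide +kernel
  obtain ⟨j, hj⟩ := h i
  rw [Set.mem_iInter] at hp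
  exact hj.notMem (hp 0) (hp j)

theorem disk_not_stabbable_three : ¬ Stabbable 3 fun i ↦ (disk i).toSet := by
  have h := not_stabbable_succ_sumElim (fun i i' ↦ disk_inter_nonempty (.inr i) (.inr i'))
    subsingleton_outerDisk_of_mem_centralDisk notMem_outerDisk_of_mem_iInter_centralDisk
    outerDisk_not_stabbable_two
  rintro ⟨P, hcard, hP⟩
  exact h ⟨P, hcard, Sum.rec (fun j ↦ hP (.inl j)) (fun i ↦ hP (.inr i))⟩

/-- **A lower bound with 13 disks.**
There is a set of 13 pairwise intersecting closed disks in `ℝ²` (given by their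
centers and positive radii) that cannot be stabbed by three points: for every set `P`
of at most three points, some disk of the family contains no point of `P`. -/
theorem thirteen_disks_not_stabbed_by_three_points :
    ∃ 𝒟 : Finset (EuclideanSpace ℝ (Fin 2) × ℝ),
      𝒟.card = 13 ∧
      (∀ D ∈ 𝒟, 0 < D.2) ∧
      (∀ D ∈ 𝒟, ∀ D' ∈ 𝒟,
        (Metric.closedBall D.1 D.2 ∩ Metric.closedBall D'.1 D'.2).Nonempty) ∧
      ∀ P : Finset (EuclideanSpace ℝ (Fin 2)), P.card ≤ 3 →
        ∃ D ∈ 𝒟, ∀ p ∈ P, p ∉ Metric.closedBall D.1 D.2 := by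
  have hinj : Function.Injective fun i ↦ ((disk i).center, ((disk i).r : ℝ)) := fun i j hij ↦
    disk_r_injective (Int.cast_injective (congrArg Prod.snd hij))
  refine ⟨univ.image fun i ↦ ((disk i).center, ((disk i).r : ℝ)), ?_, ?_, ?_, fun P hcard ↦ ?_⟩
  · rw [card_image_of_injective _ hinj, card_univ, Fintype.card_sum, Fintype.card_fin,
      Fintype.card_fin]
  · simpa only [forall_mem_image, mem_univ, true_imp_iff, Int.cast_pos] using disk_r_pos
  · simp only [forall_mem_image, mem_univ, true_imp_iff]
    exact fun i j ↦ disk_inter_nonempty i j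
  · by_contra! h
    rw [forall_mem_image] at h
    exact disk_not_stabbable_three ⟨P, hcard, fun i ↦ h (mem_univ i)⟩
end
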